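/- arXiv:1205.0236 — 2 statements merged into one kernel-verified Lean document; each statement's English description precedes it below -/
import Mathlib

section
/- Nonvanishing near zero and meromorphy of reciprocals (z-case): Let δ > 0, σ ∈ (0,∞], and let f : Ω(δ,σ) → ℂ be z-Hahn holomorphic, represented on Ω(δ',σ) by the normally convergent series f(w) = ∑_{α∈S} a_α e^{αw}, and assume f is not identically zero, so that m := min{α ∈ S : a_α ≠ 0} exists with a_m ≠ 0. Then there exists δ'' ∈ (0,δ'] such that f(w) ≠ 0 for all w ∈ Ω(δ'',σ), and the function w ↦ e^{mw} / f(w) is z-Hahn holomorphic on Ω(δ'',σ) with value 1/a_m at zero. -/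
noncomputable section

/-- The logarithm of the punctured disc of radius `δ` and half-opening angle `σ`
on the logarithmic cover of `ℂ`. -/
def Omega (δ : ℝ) (σ : ENNReal) : Set ℂ :=
  {w : ℂ | w.re < Real.log δ ∧ ENNReal.ofReal |w.im| < σ}

/-!
A generalized power series is a Hahn series `x` over `ℝ`, and normal convergence at radius `r` says
that its weighted `ℓ¹` norm `∑ ‖x_α‖ r ^ α` is finite. This norm is submultiplicative, so normally
convergent series form a ring on which `x ↦ ∑ e^{αw} x_α` is multiplicative.

Write `x = x_m z^m (1 - y)`, where `y` has only positive exponents. The weighted norm of `y` tends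
to `0` with the radius, so for a small radius it is below `1` and the formal inverse `∑ yⁿ` of
`1 - y` converges normally. Hence so does `u := x_m⁻¹ ∑ yⁿ`, and evaluating `x * u = z^m` gives both
the invertibility of `f(w)` and the expansion of `e^{mw} / f(w)`.
-/

open Filter Topology HahnSeries

theorem hasSum_sum_antidiagonal {Γ M : Type*} [AddCommMonoid Γ] [PartialOrder Γ]
    [IsOrderedCancelAddMonoid Γ] [AddCommGroup M] [UniformSpace M] [IsUniformAddGroup M]
    [CompleteSpace M] [T2Space M] {s t : Set Γ} (hs : s.IsPWO) (ht : t.IsPWO) {g : Γ × Γ → M}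
    (hg : Function.support g ⊆ s ×ˢ t) {b : M} (hb : HasSum g b) :
    HasSum (fun γ => ∑ p ∈ Finset.antidiagonal hs ht γ, g p) b := by
  convert hb.tsum_fiberwise fun p : Γ × Γ => p.1 + p.2 using 2 with γ
  rw [tsum_subtype, tsum_eq_sum (s := Finset.antidiagonal hs ht γ)]
  · refine Finset.sum_congr rfl fun p hp => (Set.indicator_of_mem ?_ g).symm
    exact (Finset.mem_antidiagonal.1 hp).2.2
  · intro p hp
    refine Set.indicator_apply_eq_zero.2 fun hpγ => ?_
    by_contra hgp
    exact hp (Finset.mem_antidiagonal.2 ⟨(hg hgp).1, (hg hgp).2, hpγ⟩)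

theorem orderTop_pos_iff_forall_nonpos {Γ R : Type*} [Zero Γ] [LinearOrder Γ] [Zero R]
    {x : HahnSeries Γ R} : 0 < x.orderTop ↔ ∀ α ≤ 0, x.coeff α = 0 := by
  refine ⟨fun hx α hα => coeff_eq_zero_of_lt_orderTop ((WithTop.coe_le_coe.2 hα).trans_lt hx),
    fun hx => ?_⟩
  by_contra! h
  obtain ⟨α, hα⟩ := WithTop.ne_top_iff_exists.1 (h.trans_lt WithTop.top_pos).ne
  exact coeff_orderTop_ne hα.symm (hx α (WithTop.coe_le_coe.1 (hα ▸ h)))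

theorem coeff_hsum_powers_of_nonpos {Γ R : Type*} [AddCommMonoid Γ] [LinearOrder Γ]
    [IsOrderedCancelAddMonoid Γ] [CommRing R] {y : HahnSeries Γ R} (hy : 0 < y.orderTop)
    {α : Γ} (hα : α ≤ 0) :
    (SummableFamily.powers y).hsum.coeff α = (1 : HahnSeries Γ R).coeff α := by
  rw [SummableFamily.coeff_hsum, SummableFamily.coe_powers hy, finsum_eq_single _ 0, pow_zero]
  intro n hn
  refine orderTop_pos_iff_forall_nonpos.1 ?_ α hα
  exact (nsmul_pos hy hn).trans_le orderTop_nsmul_le_orderTop_pow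

/-- The weighted `ℓ¹` norm `∑ ‖x_α‖ r ^ α`; it takes the junk value `0` unless
`NormallyConvergent x r`. -/
def weightedNorm {X : Type*} [NormedAddCommGroup X] (x : HahnSeries ℝ X) (r : ℝ) : ℝ :=
  ∑' α, ‖x.coeff α‖ * r ^ α

theorem weightedNorm_nonneg {X : Type*} [NormedAddCommGroup X] (x : HahnSeries ℝ X) {r : ℝ}
    (hr : 0 ≤ r) : 0 ≤ weightedNorm x r :=
  tsum_nonneg fun α => by positivity

/-- Normal convergence at radius `r` of the generalized power series `x`, which may have negative
exponents. -/
def NormallyConvergent {X : Type*} [NormedAddCommGroup X] (x : HahnSeries ℝ X) (r : ℝ) : Prop :=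
  Summable fun α => ‖x.coeff α‖ * r ^ α

/-- The sum `∑ e^{αw} x_α` of the generalized power series `x` at the point `z = e^w` of the
logarithmic cover. -/
def expEval {X : Type*} [NormedAddCommGroup X] [NormedSpace ℂ X] (w : ℂ) (x : HahnSeries ℝ X) : X :=
  ∑' α : ℝ, Complex.exp (α * w) • x.coeff α

namespace NormallyConvergent

section NormedAddCommGroup

variable {X : Type*} [NormedAddCommGroup X] {x y : HahnSeries ℝ X} {r : ℝ}

theorem single (m : ℝ) (b : X) (r : ℝ) : NormallyConvergent (single m b) r :=
  summable_of_ne_finset_zero (s := {m}) fun α hα => by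
    rw [coeff_single_of_ne (by simpa using hα), norm_zero, zero_mul]

theorem sub (hr : 0 ≤ r) (hx : NormallyConvergent x r) (hy : NormallyConvergent y r) :
    NormallyConvergent (x - y) r := by
  refine (hx.add hy).of_nonneg_of_le (fun α => by positivity) fun α => ?_
  rw [coeff_sub, ← add_mul]
  gcongr
  exact norm_sub_le _ _

theorem countable_support (hr : 0 < r) (hx : NormallyConvergent x r) : x.support.Countable :=
  (Summable.countable_support hx).mono fun α hα =>
    mul_ne_zero (norm_ne_zero_iff.2 hα) (Real.rpow_pos_of_pos hr α).ne'

theorem mono {s : ℝ} (hs : 0 < s) (hsr : s ≤ r) (hx : NormallyConvergent x r) :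
    NormallyConvergent x s := by
  have hr : 0 < r := hs.trans_le hsr
  -- Negative exponents cost at most the constant factor `(s / r) ^ x.order`.
  refine (hx.mul_left ((s / r) ^ x.order)).of_nonneg_of_le (fun α => by positivity) fun α => ?_
  rcases eq_or_ne (x.coeff α) 0 with hα | hα
  · simp [hα]
  calc ‖x.coeff α‖ * s ^ α = (s / r) ^ α * (‖x.coeff α‖ * r ^ α) := by
        rw [Real.div_rpow hs.le hr.le]; field_simp
    _ ≤ (s / r) ^ x.order * (‖x.coeff α‖ * r ^ α) := by
        refine mul_le_mul_of_nonneg_right ?_ (by positivity)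
        exact Real.rpow_le_rpow_of_exponent_ge (by positivity) ((div_le_one hr).2 hsr)
          (order_le_of_coeff_ne_zero hα)

theorem hsum {ι : Type*} {s : SummableFamily ℝ X ι} (hr : 0 ≤ r)
    (hs : ∀ i, NormallyConvergent (s i) r) (hsum : Summable fun i => weightedNorm (s i) r) :
    NormallyConvergent s.hsum r := by
  have hprod : Summable fun p : ι × ℝ => ‖(s p.1).coeff p.2‖ * r ^ p.2 :=
    (summable_prod_of_nonneg fun p => by positivity).2 ⟨hs, hsum⟩
  refine hprod.prod_symm.prod.of_nonneg_of_le (fun α => by positivity) fun α => ?_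
  have hfin : (Function.support fun i => ‖(s i).coeff α‖).Finite :=
    (s.finite_co_support α).subset fun i hi => norm_ne_zero_iff.1 hi
  simp only [Prod.fst_swap, Prod.snd_swap]
  rw [tsum_mul_right, SummableFamily.coeff_hsum,
    ← tsum_eq_finsum (L := .unconditional ι) (s.finite_co_support α)]
  gcongr
  exact norm_tsum_le_tsum_norm (summable_of_hasFiniteSupport hfin)

theorem tendsto_weightedNorm_zero (hr : 0 < r) (hx : NormallyConvergent x r)
    (hpos : 0 < x.orderTop) : Tendsto (weightedNorm x) (𝓝[>] 0) (𝓝 0) := by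
  have hcoeff : ∀ α ≤ 0, x.coeff α = 0 := orderTop_pos_iff_forall_nonpos.1 hpos
  suffices h : Tendsto (weightedNorm x) (𝓝[>] 0) (𝓝 (∑' _ : ℝ, 0)) by
    simpa only [tsum_zero] using h
  refine tendsto_tsum_of_dominated_convergence hx (fun α => ?_) ?_
  · rcases le_or_gt α 0 with hα | hα
    · simp [hcoeff α hα]
    · have hlim := (Real.continuousAt_rpow_const 0 α (.inr hα.le)).tendsto
      rw [Real.zero_rpow hα.ne'] at hlim
      simpa using (hlim.mono_left nhdsWithin_le_nhds).const_mul ‖x.coeff α‖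
  · filter_upwards [Ioc_mem_nhdsGT hr] with s ⟨hs, hsr⟩ α
    rw [Real.norm_of_nonneg (by positivity)]
    rcases le_or_gt α 0 with hα | hα
    · simp [hcoeff α hα]
    · gcongr

end NormedAddCommGroup

section NormedRing

variable {A : Type*} [NormedRing A] {x y : HahnSeries ℝ A} {r : ℝ}

theorem norm_coeff_mul_mul_rpow_le (hr : 0 < r) (x y : HahnSeries ℝ A) (γ : ℝ) :
    ‖(x * y).coeff γ‖ * r ^ γ ≤
      ∑ p ∈ Finset.antidiagonal x.isPWO_support y.isPWO_support γ,
        ‖x.coeff p.1‖ * r ^ p.1 * (‖y.coeff p.2‖ * r ^ p.2) := by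
  rw [coeff_mul]
  refine (mul_le_mul_of_nonneg_right (norm_sum_le _ _) (by positivity)).trans ?_
  rw [Finset.sum_mul]
  refine Finset.sum_le_sum fun p hp => ?_
  rw [← (Finset.mem_antidiagonal.1 hp).2.2, Real.rpow_add hr, mul_mul_mul_comm]
  gcongr
  exact norm_mul_le _ _

theorem hasSum_sum_antidiagonal_norm (hr : 0 ≤ r) (hx : NormallyConvergent x r)
    (hy : NormallyConvergent y r) :
    HasSum (fun γ => ∑ p ∈ Finset.antidiagonal x.isPWO_support y.isPWO_support γ,
      ‖x.coeff p.1‖ * r ^ p.1 * (‖y.coeff p.2‖ * r ^ p.2))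
      (weightedNorm x r * weightedNorm y r) := by
  have hnonneg (z : HahnSeries ℝ A) (α : ℝ) : 0 ≤ ‖z.coeff α‖ * r ^ α := by positivity
  have hprod : Summable fun p : ℝ × ℝ =>
      ‖x.coeff p.1‖ * r ^ p.1 * (‖y.coeff p.2‖ * r ^ p.2) :=
    Summable.mul_of_nonneg (f := fun α => ‖x.coeff α‖ * r ^ α) (g := fun α => ‖y.coeff α‖ * r ^ α)
      hx hy (hnonneg x) (hnonneg y)
  refine hasSum_sum_antidiagonal _ _ (fun p hp => ?_) (hx.hasSum.mul hy.hasSum hprod)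
  simp only [Function.mem_support, mul_ne_zero_iff, norm_ne_zero_iff] at hp
  exact ⟨hp.1.1, hp.2.1⟩

theorem mul (hr : 0 < r) (hx : NormallyConvergent x r) (hy : NormallyConvergent y r) :
    NormallyConvergent (x * y) r :=
  (hasSum_sum_antidiagonal_norm hr.le hx hy).summable.of_nonneg_of_le
    (fun γ => by positivity) (norm_coeff_mul_mul_rpow_le hr x y)

theorem weightedNorm_mul_le (hr : 0 < r) (hx : NormallyConvergent x r)
    (hy : NormallyConvergent y r) :
    weightedNorm (x * y) r ≤ weightedNorm x r * weightedNorm y r :=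
  hasSum_le (norm_coeff_mul_mul_rpow_le hr x y) (hx.mul hr hy).hasSum
    (hasSum_sum_antidiagonal_norm hr.le hx hy)

theorem pow (hr : 0 < r) (hx : NormallyConvergent x r) (n : ℕ) :
    NormallyConvergent (x ^ n) r := by
  induction n with
  | zero => exact single 0 1 r
  | succ n ih => exact pow_succ x n ▸ ih.mul hr hx

theorem weightedNorm_pow_le (hr : 0 < r) (hx : NormallyConvergent x r) (n : ℕ) :
    weightedNorm (x ^ n) r ≤ weightedNorm (1 : HahnSeries ℝ A) r * weightedNorm x r ^ n := by
  induction n with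
  | zero => simp
  | succ n ih =>
    rw [pow_succ, pow_succ, ← mul_assoc]
    refine (weightedNorm_mul_le hr (hx.pow hr n) hx).trans ?_
    exact mul_le_mul_of_nonneg_right ih (weightedNorm_nonneg x hr.le)

end NormedRing

theorem hsum_powers {A : Type*} [NormedCommRing A] {y : HahnSeries ℝ A} {r : ℝ} (hr : 0 < r)
    (hy : NormallyConvergent y r) (hpos : 0 < y.orderTop) (hlt : weightedNorm y r < 1) :
    NormallyConvergent (SummableFamily.powers y).hsum r := by
  have hgeom := (summable_geometric_of_lt_one (weightedNorm_nonneg y hr.le) hlt).mul_left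
    (weightedNorm (1 : HahnSeries ℝ A) r)
  refine hsum hr.le (fun n => ?_)
    (hgeom.of_nonneg_of_le (fun n => weightedNorm_nonneg _ hr.le) fun n => ?_) <;>
    rw [SummableFamily.powers_of_orderTop_pos hpos]
  · exact hy.pow hr n
  · exact hy.weightedNorm_pow_le hr n

theorem exists_mul_eq_single {A : Type*} [NormedCommRing A] {x : HahnSeries ℝ A} {δ m : ℝ} {b : A}
    (hδ : 0 < δ) (hx : NormallyConvergent x δ) (hmin : ∀ α < m, x.coeff α = 0)
    (hb : b * x.coeff m = 1) :
    ∃ r ∈ Set.Ioc 0 δ, ∃ u : HahnSeries ℝ A, NormallyConvergent u r ∧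
      (∀ α < 0, u.coeff α = 0) ∧ u.coeff 0 = b ∧ x * u = HahnSeries.single m 1 := by
  set y : HahnSeries ℝ A := 1 - HahnSeries.single (-m) b * x with hy
  have hyδ : NormallyConvergent y δ := (single 0 1 δ).sub hδ.le ((single (-m) b δ).mul hδ hx)
  have hpos : 0 < y.orderTop := orderTop_pos_iff_forall_nonpos.2 fun α hα => by
    rw [hy, coeff_sub, coeff_single_mul, sub_neg_eq_add, coeff_one]
    rcases hα.eq_or_lt with rfl | hα
    · simp [hb]
    · simp [hα.ne, hmin (α + m) (by linarith)]
  obtain ⟨r, hlt, hr⟩ := (((tendsto_weightedNorm_zero hδ hyδ hpos).eventually_lt_const one_pos).and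
    (Ioc_mem_nhdsGT hδ)).exists
  have hinv : HahnSeries.single (-m) b * x * (SummableFamily.powers y).hsum = 1 := by
    simpa [hy] using SummableFamily.one_sub_self_mul_hsum_powers hpos
  refine ⟨r, hr, HahnSeries.single 0 b * (SummableFamily.powers y).hsum,
    (single 0 b r).mul hr.1 (hsum_powers hr.1 (hyδ.mono hr.1 hr.2) hpos hlt), ?_, ?_, ?_⟩
  · intro α hα
    rw [coeff_single_zero_mul, coeff_hsum_powers_of_nonpos hpos hα.le, coeff_one, if_neg hα.ne,
      mul_zero]
  · rw [coeff_single_zero_mul, coeff_hsum_powers_of_nonpos hpos le_rfl, coeff_one, if_pos rfl,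
      mul_one]
  · calc x * (HahnSeries.single 0 b * (SummableFamily.powers y).hsum)
        = HahnSeries.single m 1 *
            (HahnSeries.single (-m) b * x * (SummableFamily.powers y).hsum) := by
          rw [mul_assoc, ← mul_assoc (HahnSeries.single m 1), single_mul_single, add_neg_cancel,
            one_mul, mul_left_comm]
      _ = HahnSeries.single m 1 := by rw [hinv, mul_one]

end NormallyConvergent

section expEval

variable {X : Type*} [NormedAddCommGroup X] [NormedSpace ℂ X]

theorem expEval_single (w : ℂ) (m : ℝ) (b : X) :
    expEval w (single m b) = Complex.exp (m * w) • b := by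
  rw [expEval, tsum_eq_single m fun α hα => by rw [coeff_single_of_ne hα, smul_zero],
    coeff_single_same]

theorem summable_norm_exp_smul_coeff {x : HahnSeries ℝ X} {w : ℂ}
    (hx : NormallyConvergent x (Real.exp w.re)) :
    Summable fun α : ℝ => ‖Complex.exp (α * w) • x.coeff α‖ :=
  hx.congr fun α => by
    rw [norm_smul, Complex.norm_exp, Complex.re_ofReal_mul, mul_comm α, Real.exp_mul, mul_comm]

theorem expEval_eq_tsum_subtype {x : HahnSeries ℝ X} {S : Set ℝ} (hS : x.support ⊆ S) (w : ℂ) :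
    expEval w x = ∑' α : S, Complex.exp ((α : ℝ) * w) • x.coeff α :=
  (tsum_subtype_eq_of_support_subset
    (f := fun α : ℝ => Complex.exp (α * w) • x.coeff α) fun _ hα =>
      hS (right_ne_zero_of_smul hα)).symm

theorem expEval_mul {A : Type*} [NormedRing A] [NormedAlgebra ℂ A] [CompleteSpace A]
    {x y : HahnSeries ℝ A} {w : ℂ} (hx : NormallyConvergent x (Real.exp w.re))
    (hy : NormallyConvergent y (Real.exp w.re)) :
    expEval w (x * y) = expEval w x * expEval w y := by
  let term (z : HahnSeries ℝ A) (α : ℝ) : A := Complex.exp (α * w) • z.coeff α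
  have hx' : Summable fun α => ‖term x α‖ := summable_norm_exp_smul_coeff hx
  have hy' : Summable fun α => ‖term y α‖ := summable_norm_exp_smul_coeff hy
  have hprod : HasSum (fun p : ℝ × ℝ => term x p.1 * term y p.2) (expEval w x * expEval w y) :=
    hx'.of_norm.hasSum.mul hy'.of_norm.hasSum (summable_mul_of_summable_norm hx' hy')
  have hsupp : (Function.support fun p : ℝ × ℝ => term x p.1 * term y p.2) ⊆
      x.support ×ˢ y.support := fun p hp =>
    ⟨right_ne_zero_of_smul (left_ne_zero_of_mul hp),
      right_ne_zero_of_smul (right_ne_zero_of_mul hp)⟩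
  rw [← (hasSum_sum_antidiagonal x.isPWO_support y.isPWO_support hsupp hprod).tsum_eq]
  refine tsum_congr fun γ => ?_
  rw [coeff_mul, Finset.smul_sum]
  refine Finset.sum_congr rfl fun p hp => ?_
  rw [← (Finset.mem_antidiagonal.1 hp).2.2, smul_mul_smul_comm, Complex.ofReal_add, add_mul,
    Complex.exp_add]

end expEval

theorem Omega_subset_Omega {r s : ℝ} (hr : 0 < r) (hrs : r ≤ s) (σ : ENNReal) :
    Omega r σ ⊆ Omega s σ := fun _ hw =>
  ⟨hw.1.trans_le (Real.log_le_log hr hrs), hw.2⟩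

theorem NormallyConvergent.exp_re_of_mem_Omega {X : Type*} [NormedAddCommGroup X]
    {x : HahnSeries ℝ X} {r : ℝ} {σ : ENNReal} {w : ℂ} (hr : 0 < r) (hx : NormallyConvergent x r)
    (hw : w ∈ Omega r σ) : NormallyConvergent x (Real.exp w.re) :=
  hx.mono (Real.exp_pos _) ((Real.lt_log_iff_exp_lt hr).1 hw.1).le

theorem nonvanishing_and_reciprocal_zHahn_general {A : Type*} [NormedCommRing A]
    [NormedAlgebra ℂ A] [CompleteSpace A] {δ δ' : ℝ} (hδ' : δ' ∈ Set.Ioc 0 δ) (σ : ENNReal)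
    {S : Set ℝ} (hSwf : S.IsWF) {a : ℝ → A} (hsupp : ∀ α ∉ S, a α = 0)
    (hsum : Summable fun α : S => ‖a (α : ℝ)‖ * δ' ^ (α : ℝ))
    {f : ℂ → A} (hhol : DifferentiableOn ℂ f (Omega δ σ))
    (hf : ∀ w ∈ Omega δ' σ, f w = ∑' α : S, Complex.exp (((α : ℝ) : ℂ) * w) • a (α : ℝ))
    {m : ℝ} (hm : IsUnit (a m)) (hmin : ∀ α ∈ S, a α ≠ 0 → m ≤ α) :
    ∃ δ'' ∈ Set.Ioc 0 δ',
      (∀ w ∈ Omega δ'' σ, IsUnit (f w)) ∧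
      DifferentiableOn ℂ (fun w => Complex.exp ((m : ℂ) * w) • Ring.inverse (f w)) (Omega δ'' σ) ∧
      ∃ S' : Set ℝ, S'.Countable ∧ S'.IsWF ∧ S' ⊆ Set.Ici 0 ∧
        ∃ cc : ℝ → A, (∀ γ ∉ S', cc γ = 0) ∧
          (Summable fun γ : S' => ‖cc (γ : ℝ)‖ * δ'' ^ (γ : ℝ)) ∧
          (∀ w ∈ Omega δ'' σ,
            Complex.exp ((m : ℂ) * w) • Ring.inverse (f w) =
              ∑' γ : S', Complex.exp (((γ : ℝ) : ℂ) * w) • cc (γ : ℝ)) ∧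
          cc 0 = Ring.inverse (a m) := by
  have haS : Function.support a ⊆ S := Function.support_subset_iff'.2 hsupp
  let x : HahnSeries ℝ A := ⟨a, (hSwf.mono haS).isPWO⟩
  have hx : NormallyConvergent x δ' := by
    refine (Subtype.val_injective.summable_iff fun α hα => ?_).1 hsum
    rw [Subtype.range_val] at hα
    exact mul_eq_zero_of_left (norm_eq_zero.2 (hsupp α hα)) _
  have hxmin : ∀ α < m, x.coeff α = 0 := fun α hα =>
    by_contra fun h => (hmin α (haS h) h).not_gt hα
  obtain ⟨r, hr, u, hu, hu_neg, hu_zero, hxu⟩ :=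
    hx.exists_mul_eq_single hδ'.1 hxmin (Ring.inverse_mul_cancel _ hm)
  have hmul : ∀ w ∈ Omega r σ, f w * expEval w u = Complex.exp (m * w) • 1 := fun w hw => by
    have hw' := Omega_subset_Omega hr.1 hr.2 σ hw
    rw [← expEval_single, ← hxu, expEval_mul (hx.exp_re_of_mem_Omega hδ'.1 hw')
      (hu.exp_re_of_mem_Omega hr.1 hw), hf w hw', ← expEval_eq_tsum_subtype (x := x) haS]
  have hunit : ∀ w ∈ Omega r σ, IsUnit (f w) := fun w hw => by
    refine isUnit_of_mul_isUnit_left (y := expEval w u) ?_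
    rw [hmul w hw]
    exact isUnit_one.smul (Units.mk0 _ (Complex.exp_ne_zero (m * w)))
  refine ⟨r, hr, hunit, ?_, u.support, hu.countable_support hr.1, u.isWF_support, ?_, u.coeff,
    fun γ => by simp, hu.subtype _, fun w hw => ?_, hu_zero⟩
  · have hinv : DifferentiableOn ℂ (fun w => Ring.inverse (f w)) (Omega r σ) :=
      (differentiableOn_inverse (𝕜 := ℂ) (R := A)).comp
        (hhol.mono (Omega_subset_Omega hr.1 (hr.2.trans hδ'.2) σ)) fun w hw => hunit w hw
    fun_prop
  · exact fun γ hγ => not_lt.1 fun hlt => hγ (hu_neg γ hlt)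
  · rw [← expEval_eq_tsum_subtype subset_rfl, ← one_mul (expEval w u),
      ← Ring.inverse_mul_cancel _ (hunit w hw), mul_assoc, hmul w hw, mul_smul_one]

/-- Nonvanishing near zero and Hahn holomorphy of `e^{mw}/f(w)` (z-case). -/
theorem nonvanishing_and_reciprocal_zHahn
    (δ : ℝ) (hδ : 0 < δ) (σ : ENNReal) (hσ : 0 < σ)
    (δ' : ℝ) (hδ' : δ' ∈ Set.Ioc 0 δ)
    (S : Set ℝ) (hSc : S.Countable) (hSwf : S.IsWF) (hS0 : S ⊆ Set.Ici 0)
    (a : ℝ → ℂ) (hsupp : ∀ α ∉ S, a α = 0)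
    (hsum : Summable fun α : S => ‖a (α : ℝ)‖ * δ' ^ (α : ℝ))
    (f : ℂ → ℂ)
    (hhol : DifferentiableOn ℂ f (Omega δ σ))
    (hf : ∀ w ∈ Omega δ' σ, f w = ∑' α : S, Complex.exp (((α : ℝ) : ℂ) * w) * a (α : ℝ))
    (m : ℝ) (hmS : m ∈ S) (hm : a m ≠ 0)
    (hmin : ∀ α ∈ S, a α ≠ 0 → m ≤ α) :
    ∃ δ'' ∈ Set.Ioc 0 δ',
      (∀ w ∈ Omega δ'' σ, f w ≠ 0) ∧
      DifferentiableOn ℂ (fun w => Complex.exp ((m : ℂ) * w) / f w) (Omega δ'' σ) ∧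
      ∃ S' : Set ℝ, S'.Countable ∧ S'.IsWF ∧ S' ⊆ Set.Ici 0 ∧
        ∃ cc : ℝ → ℂ, (∀ γ ∉ S', cc γ = 0) ∧
          (Summable fun γ : S' => ‖cc (γ : ℝ)‖ * δ'' ^ (γ : ℝ)) ∧
          (∀ w ∈ Omega δ'' σ,
            Complex.exp ((m : ℂ) * w) / f w =
              ∑' γ : S', Complex.exp (((γ : ℝ) : ℂ) * w) * cc (γ : ℝ)) ∧
          cc 0 = (a m)⁻¹ := by
  simpa only [isUnit_iff_ne_zero, Ring.inverse_eq_inv', smul_eq_mul, div_eq_mul_inv] using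
    nonvanishing_and_reciprocal_zHahn_general hδ' σ hSwf hsupp hsum hhol hf hm.isUnit hmin
end
end

section
/- Bounded Hahn meromorphic functions are Hahn holomorphic (z-case): Let δ > 0, σ ∈ (0,∞], and let f, g : Ω(δ,σ) → ℂ be z-Hahn holomorphic with g not identically zero, so that (by nonvanishing of g near zero) the quotient h := f/g is defined on Ω(δ₀,σ) for some δ₀ > 0. If h is bounded on the real ray {w ∈ ℝ : w < log δ₀}, then h is z-Hahn holomorphic: there exist δ'' ∈ (0,δ₀], a countable well-ordered set S' ⊂ [0,∞), and complex coefficients (c_γ)_{γ∈S'} with ∑_{γ∈S'} |c_γ| (δ'')^γ < ∞ and h(w) = ∑_{γ∈S'} c_γ e^{γw} for all w ∈ Ω(δ'',σ). -/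
noncomputable section

/-- A complex valued function is z-Hahn holomorphic on `Ω(δ,σ)` if it is holomorphic
there and is represented near zero by a normally convergent generalized power series. -/
def ZHahnHolomorphicOn (δ : ℝ) (σ : ENNReal) (f : ℂ → ℂ) : Prop :=
  DifferentiableOn ℂ f (Omega δ σ) ∧
  ∃ δ' ∈ Set.Ioc 0 δ, ∃ S : Set ℝ, S.Countable ∧ S.IsWF ∧ S ⊆ Set.Ici 0 ∧
    ∃ a : ℝ → ℂ,
      (Summable fun α : S => ‖a (α : ℝ)‖ * δ' ^ (α : ℝ)) ∧
      ∀ w ∈ Omega δ' σ, f w = ∑' α : S, Complex.exp (((α : ℝ) : ℂ) * w) * a (α : ℝ)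

/-!
Generalized power series form the field of Hahn series with real exponents, so `f / g` has a formal
expansion `F / G`, possibly with negative exponents. Measure a Hahn series by the weight
`∑ ‖a_α‖ e^{αt}`. The weight is submultiplicative, and it tends to `0` as `t → -∞` when all
exponents are positive. Hence the geometric series for the inverse of `1 - x`, with `x` of positive
order, converges near `-∞`, so inverses of convergent series converge and `F / G` does represent
`f / g`.
If `F / G` had negative order, its inverse would have positive order and tend to `0` along the real
ray; since `f / g` is bounded there, the product could not be `1`.
-/

open Filter HahnSeries
open scoped ENNReal Topology

section Weight

variable {E : Type*} [NormedAddCommGroup E]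

/-- The weight `∑ ‖a_α‖ e^{αt}` of a Hahn series; normal convergence on `Ω(δ, σ)` means that the
weight at `t = log δ` is finite. It takes values in `ℝ≥0∞` so that no summability is presupposed. -/
def hahnWeight (t : ℝ) (F : HahnSeries ℝ E) : ℝ≥0∞ :=
  ∑' α, ‖F.coeff α‖ₑ * ENNReal.ofReal (Real.exp (α * t))

lemma hahnWeight_ne_top_iff_summable {t : ℝ} {F : HahnSeries ℝ E} :
    hahnWeight t F ≠ ∞ ↔ Summable fun α => ‖F.coeff α‖ * Real.exp (α * t) := by
  have hterm (α : ℝ) : ‖F.coeff α‖ₑ * ENNReal.ofReal (Real.exp (α * t)) =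
      ‖‖F.coeff α‖ * Real.exp (α * t)‖ₑ := by
    rw [enorm_mul, enorm_norm, Real.enorm_of_nonneg (Real.exp_pos _).le]
  simp only [hahnWeight, hterm, tsum_enorm_ne_top_iff_summable_norm, norm_mul, norm_norm,
    Real.norm_of_nonneg (Real.exp_pos _).le]

lemma countable_support_of_hahnWeight_ne_top {t : ℝ} {F : HahnSeries ℝ E}
    (hF : hahnWeight t F ≠ ∞) : F.support.Countable := by
  refine (Summable.countable_support_ennreal hF).mono fun α hα => ?_
  simpa [Real.exp_pos] using hα

lemma hahnWeight_le_exp_mul {ρ t t' : ℝ} {F : HahnSeries ℝ E} (hρ : ∀ α ∈ F.support, ρ ≤ α)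
    (ht : t' ≤ t) :
    hahnWeight t' F ≤ ENNReal.ofReal (Real.exp (ρ * (t' - t))) * hahnWeight t F := by
  rw [hahnWeight, hahnWeight, ← ENNReal.tsum_mul_left]
  refine ENNReal.tsum_le_tsum fun α => ?_
  by_cases hα : F.coeff α = 0
  · simp [hα]
  have hexp : Real.exp (α * t') ≤ Real.exp (ρ * (t' - t)) * Real.exp (α * t) := by
    rw [← Real.exp_add, Real.exp_le_exp]
    nlinarith [hρ α hα]
  calc ‖F.coeff α‖ₑ * ENNReal.ofReal (Real.exp (α * t'))
      ≤ ‖F.coeff α‖ₑ * ENNReal.ofReal (Real.exp (ρ * (t' - t)) * Real.exp (α * t)) := by gcongr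
    _ = ENNReal.ofReal (Real.exp (ρ * (t' - t))) *
          (‖F.coeff α‖ₑ * ENNReal.ofReal (Real.exp (α * t))) := by
      rw [ENNReal.ofReal_mul (Real.exp_pos _).le, mul_left_comm]

lemma hahnWeight_ne_top_of_le {t t' : ℝ} {F : HahnSeries ℝ E} (hF : hahnWeight t F ≠ ∞)
    (ht : t' ≤ t) : hahnWeight t' F ≠ ∞ :=
  ne_top_of_le_ne_top (ENNReal.mul_ne_top ENNReal.ofReal_ne_top hF)
    (hahnWeight_le_exp_mul (fun _ => order_le_of_coeff_ne_zero) ht)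

lemma tendsto_hahnWeight_atBot {t : ℝ} {F : HahnSeries ℝ E} (hF : hahnWeight t F ≠ ∞)
    (hpos : 0 < F.orderTop) : Tendsto (fun s => hahnWeight s F) atBot (𝓝 0) := by
  rcases eq_or_ne F 0 with rfl | hF0
  · simp [hahnWeight]
  have horder : 0 < F.order := (zero_lt_orderTop_iff hF0).1 hpos
  have hexp : Tendsto (fun s => Real.exp (F.order * (s - t))) atBot (𝓝 0) :=
    Real.tendsto_exp_atBot.comp
      ((tendsto_atBot_add_const_right _ (-t) tendsto_id).const_mul_atBot horder)
  have hbound : Tendsto (fun s => ENNReal.ofReal (Real.exp (F.order * (s - t))) * hahnWeight t F)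
      atBot (𝓝 0) := by
    simpa using ENNReal.Tendsto.mul_const (ENNReal.tendsto_ofReal hexp) (Or.inr hF)
  refine tendsto_of_tendsto_of_tendsto_of_le_of_le' tendsto_const_nhds hbound
    (Eventually.of_forall fun _ => zero_le) ?_
  filter_upwards [eventually_le_atBot t] with s hs
  exact hahnWeight_le_exp_mul (fun _ => order_le_of_coeff_ne_zero) hs

lemma hahnWeight_single (t β : ℝ) (b : E) :
    hahnWeight t (single β b) = ‖b‖ₑ * ENNReal.ofReal (Real.exp (β * t)) := by
  rw [hahnWeight, tsum_eq_single β fun α hα => by simp [coeff_single_of_ne hα], coeff_single_same]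

lemma hahnWeight_single_ne_top (t β : ℝ) (b : E) : hahnWeight t (single β b) ≠ ∞ := by
  rw [hahnWeight_single]
  exact ENNReal.mul_ne_top enorm_ne_top ENNReal.ofReal_ne_top

lemma hahnWeight_sub_le (t : ℝ) (F G : HahnSeries ℝ E) :
    hahnWeight t (F - G) ≤ hahnWeight t F + hahnWeight t G := by
  simp only [hahnWeight, ← ENNReal.tsum_add, ← add_mul, coeff_sub]
  gcongr
  exact enorm_sub_le

lemma hahnWeight_hsum_le {ι : Type*} (t : ℝ) (s : SummableFamily ℝ E ι) :
    hahnWeight t s.hsum ≤ ∑' i, hahnWeight t (s i) := by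
  simp only [hahnWeight]
  rw [ENNReal.tsum_comm]
  refine ENNReal.tsum_le_tsum fun α => ?_
  have hcoeff : s.hsum.coeff α = ∑' i, (s i).coeff α :=
    (tsum_eq_finsum (s.finite_co_support α)).symm
  rw [ENNReal.tsum_mul_right, hcoeff]
  gcongr
  exact enorm_tsum_le_tsum_enorm

end Weight

lemma coeff_mul_eq_tsum_fiber {Γ R : Type*} [AddCommMonoid Γ] [PartialOrder Γ]
    [IsOrderedCancelAddMonoid Γ] [NonUnitalNonAssocSemiring R] [TopologicalSpace R]
    (F G : HahnSeries Γ R) (γ : Γ) :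
    (F * G).coeff γ =
      ∑' p : (fun p : Γ × Γ => p.1 + p.2) ⁻¹' {γ}, F.coeff p.1.1 * G.coeff p.1.2 := by
  have hindicator (p : Γ × Γ) (hp : p ∉ Finset.antidiagonal F.isPWO_support G.isPWO_support γ) :
      ((fun p : Γ × Γ => p.1 + p.2) ⁻¹' {γ}).indicator
        (fun p => F.coeff p.1 * G.coeff p.2) p = 0 := by
    refine Set.indicator_apply_eq_zero.2 fun hpγ => ?_
    by_contra hne
    exact hp (Finset.mem_antidiagonal.2
      ⟨left_ne_zero_of_mul hne, right_ne_zero_of_mul hne, hpγ⟩)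
  rw [tsum_subtype ((fun p : Γ × Γ => p.1 + p.2) ⁻¹' {γ}) fun p => F.coeff p.1 * G.coeff p.2,
    tsum_eq_sum hindicator, coeff_mul]
  refine Finset.sum_congr rfl fun p hp => ?_
  have hpγ : p ∈ (fun p : Γ × Γ => p.1 + p.2) ⁻¹' {γ} := (Finset.mem_antidiagonal.1 hp).2.2
  rw [Set.indicator_of_mem hpγ]

lemma order_inv_of_ne_zero {Γ K : Type*} [AddCommGroup Γ] [LinearOrder Γ] [IsOrderedAddMonoid Γ]
    [Field K] {F : HahnSeries Γ K} (hF : F ≠ 0) : F⁻¹.order = -F.order := by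
  refine eq_neg_of_add_eq_zero_right ?_
  rw [← order_mul hF (inv_ne_zero hF), mul_inv_cancel₀ hF, order_one]

section Mul

variable {R : Type*}

lemma hahnWeight_mul_le [NonUnitalNormedRing R] (t : ℝ) (F G : HahnSeries ℝ R) :
    hahnWeight t (F * G) ≤ hahnWeight t F * hahnWeight t G := by
  let term (H : HahnSeries ℝ R) (α : ℝ) : ℝ≥0∞ :=
    ‖H.coeff α‖ₑ * ENNReal.ofReal (Real.exp (α * t))
  have hterm (α β : ℝ) : ‖F.coeff α * G.coeff β‖ₑ * ENNReal.ofReal (Real.exp ((α + β) * t)) ≤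
      term F α * term G β := by
    rw [add_mul, Real.exp_add, ENNReal.ofReal_mul (Real.exp_pos _).le, mul_mul_mul_comm]
    gcongr
    simp only [enorm_eq_nnnorm]
    exact_mod_cast nnnorm_mul_le (F.coeff α) (G.coeff β)
  calc hahnWeight t (F * G)
      ≤ ∑' γ, ∑' p : (fun p : ℝ × ℝ => p.1 + p.2) ⁻¹' {γ}, term F p.1.1 * term G p.1.2 := by
        refine ENNReal.tsum_le_tsum fun γ => ?_
        rw [coeff_mul_eq_tsum_fiber]
        grw [enorm_tsum_le_tsum_enorm]
        rw [← ENNReal.tsum_mul_right]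
        refine ENNReal.tsum_le_tsum fun ⟨p, hp⟩ => ?_
        obtain rfl : p.1 + p.2 = γ := hp
        exact hterm p.1 p.2
    _ = ∑' p : ℝ × ℝ, term F p.1 * term G p.2 :=
        ENNReal.tsum_fiberwise (fun p : ℝ × ℝ => term F p.1 * term G p.2) fun p => p.1 + p.2
    _ = hahnWeight t F * hahnWeight t G := by
        rw [ENNReal.tsum_prod (f := fun α β => term F α * term G β)]
        simp only [ENNReal.tsum_mul_left, ENNReal.tsum_mul_right, term, hahnWeight]

lemma hahnWeight_mul_ne_top [NonUnitalNormedRing R] {t : ℝ} {F G : HahnSeries ℝ R}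
    (hF : hahnWeight t F ≠ ∞) (hG : hahnWeight t G ≠ ∞) : hahnWeight t (F * G) ≠ ∞ :=
  ne_top_of_le_ne_top (ENNReal.mul_ne_top hF hG) (hahnWeight_mul_le t F G)

lemma hahnWeight_one_ne_top [NormedRing R] (t : ℝ) : hahnWeight t (1 : HahnSeries ℝ R) ≠ ∞ :=
  hahnWeight_single_ne_top t 0 1

lemma hahnWeight_pow_le [NormedRing R] [NormOneClass R] (t : ℝ) (F : HahnSeries ℝ R) (n : ℕ) :
    hahnWeight t (F ^ n) ≤ hahnWeight t F ^ n := by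
  induction n with
  | zero => simpa using (hahnWeight_single t 0 (1 : R)).le
  | succ n ih =>
    rw [pow_succ, pow_succ]
    exact (hahnWeight_mul_le t _ _).trans (by gcongr)

lemma hahnWeight_hsum_powers_ne_top [NormedCommRing R] [NormOneClass R] {t : ℝ}
    {x : HahnSeries ℝ R} (hpos : 0 < x.orderTop) (hx : hahnWeight t x < 1) :
    hahnWeight t (SummableFamily.powers x).hsum ≠ ∞ := by
  have hle : hahnWeight t (SummableFamily.powers x).hsum ≤ (1 - hahnWeight t x)⁻¹ := by
    rw [← ENNReal.tsum_geometric]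
    refine (hahnWeight_hsum_le t _).trans (ENNReal.tsum_le_tsum fun n => ?_)
    rw [SummableFamily.powers_of_orderTop_pos hpos]
    exact hahnWeight_pow_le t x n
  exact ne_top_of_le_ne_top (ENNReal.inv_ne_top.2 (tsub_pos_of_lt hx).ne') hle

lemma eventually_hahnWeight_inv_ne_top [NormedField R] {t : ℝ} {F : HahnSeries ℝ R}
    (hF : hahnWeight t F ≠ ∞) (hF0 : F ≠ 0) : ∀ᶠ s in atBot, hahnWeight s F⁻¹ ≠ ∞ := by
  set x : HahnSeries ℝ R := 1 - single (-F.order) F.leadingCoeff⁻¹ * F with hx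
  have hpos : 0 < x.orderTop :=
    unit_aux F (inv_mul_cancel₀ (leadingCoeff_ne_zero.2 hF0)) _ (neg_add_cancel F.order)
  have hxt : hahnWeight t x ≠ ∞ := by
    refine ne_top_of_le_ne_top (ENNReal.add_ne_top.2 ⟨hahnWeight_one_ne_top t, ?_⟩)
      (hahnWeight_sub_le t _ _)
    exact hahnWeight_mul_ne_top (hahnWeight_single_ne_top t _ _) hF
  filter_upwards [(tendsto_hahnWeight_atBot hxt hpos).eventually (gt_mem_nhds one_pos)] with s hs
  rw [inv_def, ← hx]
  exact hahnWeight_mul_ne_top (hahnWeight_single_ne_top s _ _)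
    (hahnWeight_hsum_powers_ne_top hpos hs)

end Mul

section Eval

variable {E : Type*} [NormedAddCommGroup E] [NormedSpace ℂ E]

/-- The value `∑ a_α e^{αw}` of a Hahn series at `w`, where `e^{αw}` is the power `z^α` in the
logarithmic coordinate; it is meaningful if the weight at `Re w` is finite. -/
def hahnEval (F : HahnSeries ℝ E) (w : ℂ) : E :=
  ∑' α : ℝ, Complex.exp (α * w) • F.coeff α

lemma enorm_exp_smul_coeff (F : HahnSeries ℝ E) (w : ℂ) (α : ℝ) :
    ‖Complex.exp (α * w) • F.coeff α‖ₑ = ‖F.coeff α‖ₑ * ENNReal.ofReal (Real.exp (α * w.re)) := by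
  rw [enorm_smul, mul_comm, ← ofReal_norm (Complex.exp _), Complex.norm_exp,
    Complex.re_ofReal_mul]

lemma enorm_hahnEval_le (F : HahnSeries ℝ E) (w : ℂ) : ‖hahnEval F w‖ₑ ≤ hahnWeight w.re F := by
  simpa only [hahnWeight, hahnEval, enorm_exp_smul_coeff] using
    enorm_tsum_le_tsum_enorm (f := fun α : ℝ => Complex.exp (α * w) • F.coeff α)

lemma summable_norm_exp_smul_coeff_s19 {F : HahnSeries ℝ E} {w : ℂ} (hF : hahnWeight w.re F ≠ ∞) :
    Summable fun α : ℝ => ‖Complex.exp (α * w) • F.coeff α‖ := by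
  rw [← tsum_enorm_ne_top_iff_summable_norm]
  simpa only [enorm_exp_smul_coeff, hahnWeight] using hF

lemma hahnEval_eq_tsum_subtype {F : HahnSeries ℝ E} {S : Set ℝ} (hS : F.support ⊆ S) (w : ℂ) :
    hahnEval F w = ∑' α : S, Complex.exp (((α : ℝ) : ℂ) * w) • F.coeff α := by
  have hsupp : (Function.support fun α : ℝ => Complex.exp (α * w) • F.coeff α) ⊆ S :=
    (Function.support_smul_subset_right _ _).trans hS
  exact (tsum_subtype_eq_of_support_subset hsupp).symm

@[simp]
lemma hahnEval_zero (w : ℂ) : hahnEval (0 : HahnSeries ℝ E) w = 0 := by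
  simp [hahnEval]

variable {A : Type*} [NormedRing A] [NormedAlgebra ℂ A]

lemma hahnEval_one (w : ℂ) : hahnEval (1 : HahnSeries ℝ A) w = 1 := by
  rw [hahnEval, tsum_eq_single 0 fun α hα => by simp [coeff_one, hα]]
  simp

lemma hahnEval_mul [CompleteSpace A] {F G : HahnSeries ℝ A} {w : ℂ}
    (hF : hahnWeight w.re F ≠ ∞) (hG : hahnWeight w.re G ≠ ∞) :
    hahnEval (F * G) w = hahnEval F w * hahnEval G w := by
  have hFs := summable_norm_exp_smul_coeff_s19 hF
  have hGs := summable_norm_exp_smul_coeff_s19 hG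
  have hfiber := (summable_mul_of_summable_norm hFs hGs).hasSum.tsum_fiberwise
    fun p : ℝ × ℝ => p.1 + p.2
  rw [hahnEval, hahnEval, hahnEval, tsum_mul_tsum_of_summable_norm hFs hGs, ← hfiber.tsum_eq]
  refine tsum_congr fun γ => ?_
  rw [coeff_mul_eq_tsum_fiber, ← tsum_const_smul'']
  refine tsum_congr fun ⟨p, hp⟩ => ?_
  obtain rfl : p.1 + p.2 = γ := hp
  rw [smul_mul_smul_comm, ← Complex.exp_add, ← add_mul, Complex.ofReal_add]

lemma hahnEval_mul_hahnEval_inv {F : HahnSeries ℝ ℂ} {w : ℂ} (hF0 : F ≠ 0)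
    (hF : hahnWeight w.re F ≠ ∞) (hFinv : hahnWeight w.re F⁻¹ ≠ ∞) :
    hahnEval F w * hahnEval F⁻¹ w = 1 := by
  rw [← hahnEval_mul hF hFinv, mul_inv_cancel₀ hF0, hahnEval_one]

end Eval

lemma ofReal_mem_Omega {δ t : ℝ} {σ : ℝ≥0∞} (hσ : 0 < σ) (ht : t < Real.log δ) :
    (t : ℂ) ∈ Omega δ σ :=
  ⟨by simpa using ht, by simpa using hσ⟩

section Expansion

variable {E : Type*} [NormedAddCommGroup E] [NormedSpace ℂ E]

/-- `F` is the expansion of `f` near zero: for all small `δ` it converges normally to `f` on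
`Ω(δ, σ)`. Negative exponents are allowed, so that Hahn meromorphic functions have expansions. -/
def HasHahnExpansion (σ : ℝ≥0∞) (f : ℂ → E) (F : HahnSeries ℝ E) : Prop :=
  ∀ᶠ δ in 𝓝[>] (0 : ℝ), hahnWeight (Real.log δ) F ≠ ∞ ∧ ∀ w ∈ Omega δ σ, f w = hahnEval F w

namespace HasHahnExpansion

variable {σ : ℝ≥0∞}

lemma of_eqOn {δ : ℝ} (hδ : 0 < δ) {f : ℂ → E} {F : HahnSeries ℝ E}
    (hF : hahnWeight (Real.log δ) F ≠ ∞) (hfF : Set.EqOn f (hahnEval F) (Omega δ σ)) :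
    HasHahnExpansion σ f F := by
  filter_upwards [Ioc_mem_nhdsGT hδ] with δ' hδ'
  have hlog : Real.log δ' ≤ Real.log δ := Real.log_le_log hδ'.1 hδ'.2
  exact ⟨hahnWeight_ne_top_of_le hF hlog, fun w hw => hfF ⟨hw.1.trans_le hlog, hw.2⟩⟩

lemma eventually_atBot {f : ℂ → E} {F : HahnSeries ℝ E} (hf : HasHahnExpansion σ f F)
    (hσ : 0 < σ) : ∀ᶠ t : ℝ in atBot, hahnWeight t F ≠ ∞ ∧ f t = hahnEval F t := by
  obtain ⟨δ, hF, hfF⟩ := Eventually.exists hf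
  filter_upwards [eventually_lt_atBot (Real.log δ)] with t ht
  exact ⟨hahnWeight_ne_top_of_le hF ht.le, hfF t (ofReal_mem_Omega hσ ht)⟩

lemma ne_zero_of_frequently {f : ℂ → E} {F : HahnSeries ℝ E} (hf : HasHahnExpansion σ f F)
    (hσ : 0 < σ) (hne : ∃ᶠ t : ℝ in atBot, f t ≠ 0) : F ≠ 0 := by
  rintro rfl
  obtain ⟨t, hft, -, hf0⟩ := (hne.and_eventually (hf.eventually_atBot hσ)).exists
  exact hft (by rw [hf0, hahnEval_zero])

lemma div {f g : ℂ → ℂ} {F G : HahnSeries ℝ ℂ} (hf : HasHahnExpansion σ f F)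
    (hg : HasHahnExpansion σ g G) (hG0 : G ≠ 0) :
    HasHahnExpansion σ (fun w => f w / g w) (F / G) := by
  obtain ⟨δ, hGδ, -⟩ := Eventually.exists hg
  have hGinv := Real.tendsto_log_nhdsGT_zero.eventually (eventually_hahnWeight_inv_ne_top hGδ hG0)
  filter_upwards [hf, hg, hGinv] with δ ⟨hF, hfF⟩ ⟨hG, hgG⟩ hGinv
  rw [div_eq_mul_inv]
  refine ⟨hahnWeight_mul_ne_top hF hGinv, fun w hw => ?_⟩
  have hconv {H : HahnSeries ℝ ℂ} (hH : hahnWeight (Real.log δ) H ≠ ∞) : hahnWeight w.re H ≠ ∞ :=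
    hahnWeight_ne_top_of_le hH hw.1.le
  rw [hfF w hw, hgG w hw, hahnEval_mul (hconv hF) (hconv hGinv), div_eq_mul_inv,
    inv_eq_of_mul_eq_one_right (hahnEval_mul_hahnEval_inv hG0 (hconv hG) (hconv hGinv))]

lemma order_nonneg_of_eventually_norm_le {f : ℂ → ℂ} {F : HahnSeries ℝ ℂ}
    (hf : HasHahnExpansion σ f F) (hσ : 0 < σ) {M : ℝ} (hM : ∀ᶠ t : ℝ in atBot, ‖f t‖ ≤ M) :
    0 ≤ F.order := by
  by_contra! hneg
  have hF0 : F ≠ 0 := by rintro rfl; simp at hneg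
  have hinv_pos : 0 < F⁻¹.orderTop :=
    zero_lt_orderTop_of_order (by rwa [order_inv_of_ne_zero hF0, neg_pos])
  obtain ⟨t₀, hFt₀, -⟩ := (hf.eventually_atBot hσ).exists
  have hinv := eventually_hahnWeight_inv_ne_top hFt₀ hF0
  obtain ⟨t₁, hinvt₁⟩ := hinv.exists
  have hlim : Tendsto (fun t => ENNReal.ofReal M * hahnWeight t F⁻¹) atBot (𝓝 0) := by
    simpa using ENNReal.Tendsto.const_mul (tendsto_hahnWeight_atBot hinvt₁ hinv_pos)
      (Or.inr ENNReal.ofReal_ne_top)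
  have hone_le : ∀ᶠ t in atBot, 1 ≤ ENNReal.ofReal M * hahnWeight t F⁻¹ := by
    filter_upwards [hf.eventually_atBot hσ, hinv, hM] with t ⟨hFt, hft⟩ hinvt hMt
    calc (1 : ℝ≥0∞) = ‖hahnEval F t‖ₑ * ‖hahnEval F⁻¹ t‖ₑ := by
          rw [← enorm_mul, hahnEval_mul_hahnEval_inv hF0 hFt hinvt, enorm_one]
      _ ≤ ENNReal.ofReal M * hahnWeight t F⁻¹ := by
          gcongr
          · rw [← hft, ← ofReal_norm]
            exact ENNReal.ofReal_le_ofReal hMt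
          · exact enorm_hahnEval_le _ _
  exact one_ne_zero (le_zero_iff.1 (ge_of_tendsto hlim hone_le))

lemma exists_generalized_power_series {f : ℂ → E} {F : HahnSeries ℝ E} (hf : HasHahnExpansion σ f F)
    (horder : 0 ≤ F.order) {δ : ℝ} (hδ : 0 < δ) :
    ∃ δ' ∈ Set.Ioc 0 δ, ∃ S : Set ℝ, S.Countable ∧ S.IsWF ∧ S ⊆ Set.Ici 0 ∧
      ∃ a : ℝ → E, (Summable fun α : S => ‖a α‖ * δ' ^ (α : ℝ)) ∧
        ∀ w ∈ Omega δ' σ, f w = ∑' α : S, Complex.exp (((α : ℝ) : ℂ) * w) • a α := by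
  obtain ⟨δ', ⟨hF, hfF⟩, hδ'⟩ := (Eventually.and hf (Ioc_mem_nhdsGT hδ)).exists
  refine ⟨δ', hδ', F.support, countable_support_of_hahnWeight_ne_top hF, F.isWF_support,
    fun α hα => horder.trans (order_le_of_coeff_ne_zero hα), F.coeff, ?_, fun w hw => ?_⟩
  · refine ((hahnWeight_ne_top_iff_summable.1 hF).subtype F.support).congr fun α => ?_
    simp [Real.rpow_def_of_pos hδ'.1, mul_comm]
  · rw [hfF w hw, hahnEval_eq_tsum_subtype subset_rfl]

end HasHahnExpansion

lemma ZHahnHolomorphicOn.exists_hasHahnExpansion {δ : ℝ} {σ : ℝ≥0∞} {f : ℂ → ℂ}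
    (hf : ZHahnHolomorphicOn δ σ f) : ∃ F : HahnSeries ℝ ℂ, HasHahnExpansion σ f F := by
  obtain ⟨-, δ', ⟨hδ', -⟩, S, -, hS, -, a, ha, hfa⟩ := hf
  have hsupp : Function.support (S.indicator a) ⊆ S := Set.support_indicator_subset
  let F : HahnSeries ℝ ℂ := ⟨S.indicator a, (Set.isPWO_iff_isWF.2 hS).mono hsupp⟩
  refine ⟨F, .of_eqOn hδ' ?_ fun w hw => ?_⟩
  · rw [hahnWeight_ne_top_iff_summable]
    have hindicator : Summable (S.indicator fun α : ℝ => ‖a α‖ * δ' ^ α) :=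
      summable_subtype_iff_indicator.1 ha
    refine hindicator.congr fun α => ?_
    by_cases hα : α ∈ S <;> simp [F, hα, Real.rpow_def_of_pos hδ', mul_comm]
  · rw [hfa w hw, hahnEval_eq_tsum_subtype hsupp]
    exact tsum_congr fun α => by simp [F]

end Expansion

/-- Bounded Hahn meromorphic functions are Hahn holomorphic (z-case). -/
theorem bounded_hahn_meromorphic_is_hahn_holomorphic
    (δ : ℝ) (hδ : 0 < δ) (σ : ENNReal) (hσ : 0 < σ)
    (f g : ℂ → ℂ)
    (hfH : ZHahnHolomorphicOn δ σ f) (hgH : ZHahnHolomorphicOn δ σ g)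
    (hgne : ∃ w ∈ Omega δ σ, g w ≠ 0)
    (δ₀ : ℝ) (hδ₀ : δ₀ ∈ Set.Ioc 0 δ)
    (hgnonzero : ∀ w ∈ Omega δ₀ σ, g w ≠ 0)
    (hbdd : ∃ M : ℝ, ∀ t : ℝ, t < Real.log δ₀ → ‖f (t : ℂ) / g (t : ℂ)‖ ≤ M) :
    ∃ δ'' ∈ Set.Ioc 0 δ₀, ∃ S' : Set ℝ, S'.Countable ∧ S'.IsWF ∧ S' ⊆ Set.Ici 0 ∧
      ∃ c : ℝ → ℂ,
        (Summable fun γ : S' => ‖c (γ : ℝ)‖ * δ'' ^ (γ : ℝ)) ∧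
        ∀ w ∈ Omega δ'' σ,
          f w / g w = ∑' γ : S', Complex.exp (((γ : ℝ) : ℂ) * w) * c (γ : ℝ) := by
  obtain ⟨F, hF⟩ := hfH.exists_hasHahnExpansion
  obtain ⟨G, hG⟩ := hgH.exists_hasHahnExpansion
  obtain ⟨M, hM⟩ := hbdd
  have hG0 : G ≠ 0 := by
    refine hG.ne_zero_of_frequently hσ (Eventually.frequently ?_)
    filter_upwards [eventually_lt_atBot (Real.log δ₀)] with t ht
    exact hgnonzero t (ofReal_mem_Omega hσ ht)
  have hQ : HasHahnExpansion σ (fun w => f w / g w) (F / G) := hF.div hG hG0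
  have hQ_order : 0 ≤ (F / G).order :=
    hQ.order_nonneg_of_eventually_norm_le hσ ((eventually_lt_atBot (Real.log δ₀)).mono hM)
  exact hQ.exists_generalized_power_series hQ_order hδ₀.1
end
end
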